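/- Let p ≥ w ≥ 0, E ≥ 0, D ≥ 0, r_c ≥ 0, r_d ≥ 0 be real numbers. Consider the set F of tuples (f_es, f_ed, f_eg, f_sd, f_sg, f_gs) ∈ ℝ^6 satisfying: f_es, f_ed, f_eg, f_sd, f_sg, f_gs ≥ 0; f_es − f_sd − f_sg + f_gs = 0; f_es + f_gs ≤ r_c; f_sd + f_sg ≤ r_d; f_es + f_ed + f_eg ≤ E; and f_ed + f_sd ≤ D. Then the minimum over F of the cost p·(f_gs − f_ed − f_sd) − w·(f_eg + f_sg) equals −( p·min{E,D} + w·max{0, E−D} ), and it is attained at the point with f_ed = min{E,D}, f_eg = E − min{E,D}, and f_es = f_sd = f_sg = f_gs = 0. -/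

import Mathlib

/-!
Let `x = fed + fsd - fgs` be the net amount traded at the retail price and `y = feg + fsg` the
amount sold at the wholesale price. The revenue is `p * x + w * y = (p - w) * x + w * (x + y)`.
The storage balance gives `x + y = fes + fed + feg ≤ E`, and it also gives `x ≤ min E D`. As
`p - w` and `w` are nonnegative, the revenue is at most
`(p - w) * min E D + w * E = p * min E D + w * (E - min E D)`, which the stated policy attains.
-/

/-- Feasible energy flows for the single-stage energy storage problem with zero
current storage (so the storage balance forces `f_es − f_sd − f_sg + f_gs = 0`). -/
def energyFeasible (rc rd E D : ℝ) (fes fed feg fsd fsg fgs : ℝ) : Prop :=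
  0 ≤ fes ∧ 0 ≤ fed ∧ 0 ≤ feg ∧ 0 ≤ fsd ∧ 0 ≤ fsg ∧ 0 ≤ fgs ∧
  fes - fsd - fsg + fgs = 0 ∧
  fes + fgs ≤ rc ∧ fsd + fsg ≤ rd ∧
  fes + fed + feg ≤ E ∧ fed + fsd ≤ D

/-- Single-stage cost of the energy flows. -/
def energyCost (p w : ℝ) (fes fed feg fsd fsg fgs : ℝ) : ℝ :=
  p * (fgs - fed - fsd) - w * (feg + fsg)

/-- The optimal single-stage policy without storage: the minimum cost over the
feasible flow set equals `−(p·min{E,D} + w·max{0, E−D})`, attained at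
`f_ed = min{E,D}`, `f_eg = E − min{E,D}`, all other flows zero. -/
theorem energy_no_storage_optimal_policy
    (p w E D rc rd : ℝ)
    (hpw : w ≤ p) (hw : 0 ≤ w) (hE : 0 ≤ E) (hD : 0 ≤ D)
    (hrc : 0 ≤ rc) (hrd : 0 ≤ rd) :
    IsLeast {z : ℝ | ∃ fes fed feg fsd fsg fgs : ℝ,
        energyFeasible rc rd E D fes fed feg fsd fsg fgs ∧
        z = energyCost p w fes fed feg fsd fsg fgs}
      (-(p * min E D + w * max 0 (E - D))) ∧
    energyFeasible rc rd E D 0 (min E D) (E - min E D) 0 0 0 ∧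
    energyCost p w 0 (min E D) (E - min E D) 0 0 0
      = -(p * min E D + w * max 0 (E - D)) := by
  have hmax : max 0 (E - D) = E - min E D := by
    rcases le_total E D with h | h
    · rw [min_eq_left h, max_eq_left (by linarith)]; ring
    · rw [min_eq_right h, max_eq_right (by linarith)]
  have hfeas : energyFeasible rc rd E D 0 (min E D) (E - min E D) 0 0 0 := by
    have h1 : min E D ≤ E := min_le_left E D
    have h2 : min E D ≤ D := min_le_right E D
    have h3 : 0 ≤ min E D := le_min hE hD
    refine ⟨le_rfl, h3, ?_, le_rfl, le_rfl, le_rfl, ?_, ?_, ?_, ?_, ?_⟩ <;> linarith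
  have hcost : energyCost p w 0 (min E D) (E - min E D) 0 0 0
      = -(p * min E D + w * max 0 (E - D)) := by
    rw [hmax]; unfold energyCost; ring
  refine ⟨⟨⟨0, min E D, E - min E D, 0, 0, 0, hfeas, hcost.symm⟩, ?_⟩, hfeas, hcost⟩
  rintro z ⟨fes, fed, feg, fsd, fsg, fgs,
    ⟨hes, hed, heg, hsd, hsg, hgs, hbal, -, -, hEn, hDem⟩, rfl⟩
  rw [hmax]
  unfold energyCost
  -- The balance equation gives `fed + fsd - fgs = fed + fes - fsg`, hence the bound by `E`.
  have hnet : fed + fsd - fgs ≤ min E D := le_min (by linarith) (by linarith)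
  have htot : fed + fsd - fgs + (feg + fsg) ≤ E := by linarith
  have k1 := mul_le_mul_of_nonneg_left hnet (sub_nonneg.2 hpw)
  have k2 := mul_le_mul_of_nonneg_left htot hw
  linarith
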